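/- Let Γ = ((ℚ×ℝ)/ℤ²) ∪ ((ℝ×ℚ)/ℤ²) ⊂ T². For any integer q ≥ 2, any x ≠ y ∈ T² with x − y ∉ Γ, and any σ > 0, there exists a volume-preserving C^∞ diffeomorphism h of T², isotopic to the identity, such that: (1) h commutes with the translations T_{(1/q,0)} and T_{(0,1/q)}; (2) there exist x', y' ∈ T² with d(x',y') < σ, x' − y' ∉ Γ, h(x') = x, h(y') = y, and d(h(T_{(1/(2q),0)}(x')), h(T_{(1/(2q),0)}(y'))) < σ; and (3) there exists a lift h̃ of h to ℝ² with d_{C⁰}(h̃, Id_{ℝ²}) ≤ 3 d(x,y) + 2/q. -/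

import Mathlib

open Filter Topology MeasureTheory

noncomputable section

/-- The plane ℝ². -/
abbrev R2 : Type := ℝ × ℝ

/-- The Euclidean norm on ℝ². -/
def enorm2 (v : R2) : ℝ := Real.sqrt (v.1 ^ 2 + v.2 ^ 2)

/-- The two-torus 𝕋² = ℝ²/ℤ². -/
abbrev T2 : Type := AddCircle (1 : ℝ) × AddCircle (1 : ℝ)

/-- The covering projection π : ℝ² → 𝕋². -/
def pr2 (v : R2) : T2 := ((v.1 : AddCircle (1 : ℝ)), (v.2 : AddCircle (1 : ℝ)))

/-- The integer vector (v₁, v₂) regarded as a point of ℝ². -/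
def intVec (v : ℤ × ℤ) : R2 := ((v.1 : ℝ), (v.2 : ℝ))

/-- The distance on 𝕋² induced by the Euclidean metric on ℝ². -/
def distT2 (x y : T2) : ℝ :=
  sInf {r | ∃ a b : R2, pr2 a = x ∧ pr2 b = y ∧ r = enorm2 (a - b)}

/-- The C⁰ distance between two maps of 𝕋². -/
def dC0 (f g : T2 → T2) : ℝ := ⨆ x : T2, distT2 (f x) (g x)

/-- `F : ℝ² → ℝ²` is a lift of `f : 𝕋² → 𝕋²`, i.e. π ∘ F = f ∘ π. -/
def IsLift (F : R2 → R2) (f : T2 → T2) : Prop := ∀ z : R2, pr2 (F z) = f (pr2 z)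

/-- `F` commutes with the deck transformations of π : ℝ² → 𝕋². -/
def Equivariant (F : R2 → R2) : Prop :=
  ∀ (z : R2) (v : ℤ × ℤ), F (z + intVec v) = F z + intVec v

/-- `f` is a homeomorphism of 𝕋² isotopic to the identity (equivalently, admitting an
equivariant lift to ℝ²). -/
def IsotopicToId (f : T2 → T2) : Prop :=
  IsHomeomorph f ∧ ∃ F : R2 → R2, IsHomeomorph F ∧ IsLift F f ∧ Equivariant F

/-- The Misiurewicz–Ziemian rotation set of a lift `F`. -/
def rotSet (F : R2 → R2) : Set R2 :=
  {v | ∃ (z : ℕ → R2) (n : ℕ → ℕ), Tendsto n atTop atTop ∧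
      Tendsto (fun i => ((n i : ℝ))⁻¹ • (F^[n i] (z i) - z i)) atTop (𝓝 v)}

/-- Bounded mean motion, with bound κ, for a lift `F` with rotation vector `ω`:
‖Fⁿ(z) − z − nω‖ ≤ κ for all z and n. -/
def BoundedMeanMotion (F : R2 → R2) (ω : R2) (κ : ℝ) : Prop :=
  ∀ (z : R2) (n : ℕ), enorm2 (F^[n] z - z - (n : ℝ) • ω) ≤ κ

/-- The standard scalar product on ℝ². -/
def inner2 (u v : R2) : ℝ := u.1 * v.1 + u.2 * v.2

/-- v^⊥ = (−v₂, v₁)/‖v‖. -/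
def perp2 (v : R2) : R2 := (-v.2 / enorm2 v, v.1 / enorm2 v)

/-- Bounded deviation parallel to `v`, with bound κ, for a lift `F` with rotation vector `ω`:
|⟨Fⁿ(z) − z − nω, v^⊥⟩| ≤ κ for all z and n. -/
def BoundedDeviation (F : R2 → R2) (ω : R2) (v : R2) (κ : ℝ) : Prop :=
  ∀ (z : R2) (n : ℕ), |inner2 (F^[n] z - z - (n : ℝ) • ω) (perp2 v)| ≤ κ

/-- ‖ω‖_{𝕋²} = min over integer vectors z of ‖ω − z‖. -/
def normT2 (ω : R2) : ℝ := ⨅ v : ℤ × ℤ, enorm2 (ω - intVec v)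

/-- The super-Liouvillean condition: liminf_{n→∞} n⁻¹ ln ‖nω‖_{𝕋²} = −∞. -/
def SuperLiouville (ω : R2) : Prop :=
  ∀ M : ℝ, ∃ᶠ n : ℕ in atTop, (n : ℝ)⁻¹ * Real.log (normT2 ((n : ℝ) • ω)) < M

/-- The strong super-Liouvillean condition: liminf_{n→∞} n⁻¹ aⁿ ln ‖nω‖_{𝕋²} = −∞. -/
def StrongSuperLiouville (a : ℝ) (ω : R2) : Prop :=
  ∀ M : ℝ, ∃ᶠ n : ℕ in atTop, (n : ℝ)⁻¹ * a ^ n * Real.log (normT2 ((n : ℝ) • ω)) < M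

/-- ω ∈ ℝ² is irrational if ω ∉ ℚ². -/
def IrrationalVec (ω : R2) : Prop := ¬ ∃ q : ℚ × ℚ, ω = ((q.1 : ℝ), (q.2 : ℝ))

/-- ω is totally irrational if ω₁, ω₂, 1 are rationally independent. -/
def TotallyIrrationalVec (ω : R2) : Prop :=
  ∀ d1 d2 e : ℤ, (d1 : ℝ) * ω.1 + (d2 : ℝ) * ω.2 + (e : ℝ) = 0 → d1 = 0 ∧ d2 = 0 ∧ e = 0

/-- ω is semi-irrational: irrational but not totally irrational. -/
def SemiIrrationalVec (ω : R2) : Prop := IrrationalVec ω ∧ ¬ TotallyIrrationalVec ω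

/-- `v` is a character vector of the semi-irrational vector ω. -/
def IsCharacterVector (ω : R2) (v : R2) : Prop :=
  ∃ c d : ℤ, Int.gcd c d = 1 ∧ (∃ e : ℚ, (c : ℝ) * ω.1 + (d : ℝ) * ω.2 + (e : ℝ) = 0) ∧
    v = ((d : ℝ), (-c : ℝ))

/-- `f` is Hölder continuous with exponent `a`. -/
def HolderMap (a : ℝ) (f : T2 → T2) : Prop :=
  ∃ C : ℝ, ∀ x y : T2, distT2 (f x) (f y) ≤ C * distT2 x y ^ a

/-- C⁰-rigidity: liminf_{n→∞} d_{C⁰}(fⁿ, Id) = 0. -/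
def C0Rigid (f : T2 → T2) : Prop :=
  ∀ ε : ℝ, 0 < ε → ∃ᶠ n : ℕ in atTop, dC0 (f^[n]) id < ε

/-- `f` is a C^r diffeomorphism of 𝕋², expressed via a C^r lift with a C^r inverse. -/
def IsCrDiffeo (r : ℕ∞) (f : T2 → T2) : Prop :=
  ∃ F G : R2 → R2, IsLift F f ∧ Function.LeftInverse G F ∧ Function.RightInverse G F ∧
    ContDiff ℝ r F ∧ ContDiff ℝ r G

/-- C^k-rigidity: some sequence of iterates f^{n_j}, n_j → ∞, converges to the identity in the
C^k topology, i.e. admits lifts converging to the identity uniformly together with all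
derivatives of order ≤ k. -/
def CkRigid (k : ℕ∞) (f : T2 → T2) : Prop :=
  ∃ n : ℕ → ℕ, Tendsto n atTop atTop ∧
    ∃ F : ℕ → R2 → R2, (∀ j, IsLift (F j) (f^[n j])) ∧
      ∀ i : ℕ, (i : ℕ∞) ≤ k →
        Tendsto (fun j => ⨆ z : R2, ‖iteratedFDeriv ℝ i (fun w => F j w - w) z‖)
          atTop (𝓝 0)

/-- ‖x‖_𝕋 : the distance from x ∈ ℝ to the nearest integer. -/
def dT (x : ℝ) : ℝ := |x - round x|

/-- `q` is the sequence of denominators of the best rational approximations of β. -/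
def BestDenomSeq (β : ℝ) (q : ℕ → ℕ) : Prop :=
  q 0 = 1 ∧ ∀ n : ℕ,
    q n < q (n + 1) ∧
    (∀ m : ℕ, 1 ≤ m → m < q (n + 1) → dT ((q n : ℝ) * β) ≤ dT ((m : ℝ) * β)) ∧
    dT ((q n : ℝ) * β) < 1 / (q (n + 1) : ℝ)

/-- β is of non-Brjuno type: Σ_n (ln q_{n+1})/q_n = ∞. -/
def NonBrjunoNum (β : ℝ) : Prop :=
  ∀ q : ℕ → ℕ, BestDenomSeq β q → ¬ Summable fun n => Real.log (q (n + 1) : ℝ) / (q n : ℝ)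

/-- Character data of a semi-irrational vector ω: (c,d) ∈ ℤ² with gcd(c,d)=1 and
e = p/q ∈ ℚ in lowest terms with q > 0 such that c ω₁ + d ω₂ + p/q = 0. -/
def IsCharData (ω : R2) (c d p q : ℤ) : Prop :=
  Int.gcd c d = 1 ∧ Int.gcd p q = 1 ∧ 0 < q ∧
    (c : ℝ) * ω.1 + (d : ℝ) * ω.2 + (p : ℝ) / (q : ℝ) = 0

/-- ω is of strong non-Brjuno type: its character frequency 𝓕(ω̄) is of non-Brjuno type. -/
def StrongNonBrjuno (ω : R2) : Prop :=
  ∃ c d p q a b : ℤ, IsCharData ω c d p q ∧ a * d - b * c = 1 ∧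
    NonBrjunoNum (dT ((q : ℝ) * ((a : ℝ) * ω.1 + (b : ℝ) * ω.2)))

/-- The linear action of the integer matrix [[a,b],[c,d]] on ℝ². -/
def AactZ (a b c d : ℤ) (z : R2) : R2 :=
  ((a : ℝ) * z.1 + (b : ℝ) * z.2, (c : ℝ) * z.1 + (d : ℝ) * z.2)

/-- The operator norm (w.r.t. the Euclidean norm) of the matrix [[a,b],[c,d]]. -/
def AOpNormZ (a b c d : ℤ) : ℝ :=
  sSup {r | ∃ u : R2, enorm2 u ≤ 1 ∧
    r = enorm2 ((a : ℝ) * u.1 + (b : ℝ) * u.2, (c : ℝ) * u.1 + (d : ℝ) * u.2)}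

/-- Membership in the class 𝒞_{κ,ω̄}: pseudo-rotations with rotation vector ω̄ mod ℤ²
having bounded mean motion with bound κ. -/
def MemC (κ : ℝ) (w : T2) (f : T2 → T2) : Prop :=
  IsotopicToId f ∧ ∃ (F : R2 → R2) (ω : R2),
    IsLift F f ∧ rotSet F = {ω} ∧ pr2 ω = w ∧ BoundedMeanMotion F ω κ

/-- Membership in the class 𝒟_{κ,ω̄,v}: pseudo-rotations with rotation vector ω̄ mod ℤ²
having bounded deviation parallel to v with bound κ. -/
def MemD (κ : ℝ) (w : T2) (v : R2) (f : T2 → T2) : Prop :=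
  IsotopicToId f ∧ ∃ (F : R2 → R2) (ω : R2),
    IsLift F f ∧ rotSet F = {ω} ∧ pr2 ω = w ∧ BoundedDeviation F ω v κ

/-- `h : 𝕋² → 𝕋²` is homotopic to the identity (characterised by admitting an equivariant
continuous lift). -/
def HomotopicToIdMap (h : T2 → T2) : Prop :=
  ∃ H : R2 → R2, Continuous H ∧ IsLift H h ∧ Equivariant H

/-- `f` is regularly semi-conjugate to the translation T_w : x ↦ x + w, i.e. semi-conjugate via
a continuous surjection homotopic to the identity. -/
def RegSemiConj (f : T2 → T2) (w : T2) : Prop :=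
  ∃ h : T2 → T2, Continuous h ∧ Function.Surjective h ∧ HomotopicToIdMap h ∧
    ∀ x : T2, h (f x) = h x + w

/-- `f` is topologically conjugate to a translation of 𝕋². -/
def TopLinearizable (f : T2 → T2) : Prop :=
  ∃ (w : T2) (h : T2 → T2), IsHomeomorph h ∧ ∀ x : T2, h (f x) = h x + w

/-- `f` is minimal: every orbit is dense. -/
def MinimalMap (f : T2 → T2) : Prop :=
  ∀ x : T2, Dense (Set.range fun n : ℕ => f^[n] x)

/-- The open ball in 𝕋² for the Euclidean-induced distance. -/
def ballT2 (z : T2) (r : ℝ) : Set T2 := {y | distT2 z y < r}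

/-- The diameter of a subset of 𝕋² for the Euclidean-induced distance. -/
def diamT2 (S : Set T2) : ℝ := sSup {r | ∃ x ∈ S, ∃ y ∈ S, r = distT2 x y}

/-- The Euclidean diameter of a subset of ℝ². -/
def diamE (S : Set R2) : ℝ := sSup {r | ∃ x ∈ S, ∃ y ∈ S, r = enorm2 (x - y)}

/-- `F` is a bounded (measurable) fundamental domain for the ℤ²-action on ℝ². -/
def IsBoundedFundDom (F : Set R2) : Prop :=
  MeasurableSet F ∧ Bornology.IsBounded F ∧
    (∀ x : R2, ∃ v : ℤ × ℤ, x - intVec v ∈ F) ∧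
    ∀ v : ℤ × ℤ, v ≠ 0 → F ∩ ((fun x => x + intVec v) '' F) = ∅

/-- `D` is an open topological disc in 𝕋². -/
def IsTopDisc (D : Set T2) : Prop :=
  IsOpen D ∧ Nonempty (D ≃ₜ Metric.ball (0 : R2) 1)

/-- `D` is simple with respect to the fundamental domain `F`: some connected component of
π⁻¹(D) is contained in `F`. -/
def IsSimpleDisc (D : Set T2) (F : Set R2) : Prop :=
  ∃ x ∈ pr2 ⁻¹' D, connectedComponentIn (pr2 ⁻¹' D) x ⊆ F

/-- `u` is the rotation vector of `g`, defined as the mean displacement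
∫_{𝕋²} (g̃(x̃) − x̃) dλ(x) mod ℤ² of an equivariant lift `G` of `g`. -/
def IsRotOf (g : T2 → T2) (u : T2) : Prop :=
  ∃ (G : R2 → R2) (Φ : T2 → R2), Continuous G ∧ IsLift G g ∧ Equivariant G ∧
    (∀ z : R2, Φ (pr2 z) = G z - z) ∧ u = pr2 (∫ x : T2, Φ x)

/-- The set Γ = ((ℚ×ℝ)/ℤ²) ∪ ((ℝ×ℚ)/ℤ²) of points of 𝕋² with at least one rational
coordinate. -/
def GammaSet : Set T2 :=
  {x | (∃ q : ℚ, x.1 = ((q : ℝ) : AddCircle (1 : ℝ))) ∨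
       (∃ q : ℚ, x.2 = ((q : ℝ) : AddCircle (1 : ℝ)))}

/-!
Lift `x` and `y` to nearly closest points `a` and `b` of the plane. The map `h` is covered by a
vertical shear along `ψ` followed by a horizontal shear along `φ`; both functions are smooth and
`1/q`-periodic, so `h` preserves volume and commutes with the translations by `1/q`. Take
`y' = y` and let `x'` be covered by `b + e` with `e` tiny and irrational. The function `ψ` is a
smooth cutoff of the positive part of a sine wave: it vanishes at `b₁` and lifts `b + e` to the
height of `a`, while half a period later it vanishes at both points. The function `φ` vanishes at
`b₂` and pushes the lifted point onto `a`, which periodicity permits because `a₂ - b₂` is not a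
multiple of `1/q`. The pair translated by half a period is therefore not moved vertically, stays at
heights where `φ` is tiny, and remains close together.
-/

section Shear

variable {X G K : Type*} [TopologicalSpace X] [TopologicalSpace G] [TopologicalSpace K]
  [AddGroup G] [IsTopologicalAddGroup G] [AddGroup K] [IsTopologicalAddGroup K]

/-- The vertical shear of `X × G` along `g`, translating the fibre over `x` by `g x`. -/
def verticalShear (g : C(X, G)) : X × G ≃ₜ X × G where
  toEquiv := (Equiv.refl X).prodShear fun x => Equiv.addRight (g x)
  continuous_toFun := by
    change Continuous fun z : X × G => (z.1, z.2 + g z.1)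
    fun_prop
  continuous_invFun := by
    change Continuous fun z : X × G => (z.1, z.2 + -g z.1)
    fun_prop

/-- The vertical shear of `G × K` along `g` followed by the horizontal shear along `f`. -/
def doubleShear (f : C(K, G)) (g : C(G, K)) : G × K ≃ₜ G × K :=
  (verticalShear g).trans <|
    (Homeomorph.prodComm G K).trans <| (verticalShear f).trans (Homeomorph.prodComm K G)

lemma doubleShear_apply (f : C(K, G)) (g : C(G, K)) (z : G × K) :
    doubleShear f g z = (z.1 + f (z.2 + g z.1), z.2 + g z.1) :=
  rfl

lemma doubleShear_symm_apply (f : C(K, G)) (g : C(G, K)) (z : G × K) :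
    (doubleShear f g).symm z = (z.1 - f z.2, z.2 - g (z.1 - f z.2)) := by
  rw [Homeomorph.symm_apply_eq, doubleShear_apply]
  simp

lemma doubleShear_add_of_periodic {G K : Type*} [TopologicalSpace G] [TopologicalSpace K]
    [AddCommGroup G] [IsTopologicalAddGroup G] [AddCommGroup K] [IsTopologicalAddGroup K]
    {f : C(K, G)} {g : C(G, K)} {a : G} {b : K} (hf : Function.Periodic f b)
    (hg : Function.Periodic g a) (z : G × K) :
    doubleShear f g (z + (a, b)) = doubleShear f g z + (a, b) := by
  simp only [doubleShear_apply, Prod.fst_add, Prod.snd_add, Prod.mk_add_mk, hg z.1,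
    add_right_comm _ b, hf (z.2 + g z.1), add_right_comm _ a]

variable [MeasurableSpace X] [BorelSpace X] [MeasurableSpace G] [BorelSpace G]
  [MeasurableSpace K] [BorelSpace K] [SecondCountableTopology G]
  [SecondCountableTopology K]

lemma measurePreserving_verticalShear (g : C(X, G)) (μ : Measure X) (ν : Measure G) [SFinite μ]
    [SFinite ν] [ν.IsAddRightInvariant] :
    MeasurePreserving (verticalShear g) (μ.prod ν) (μ.prod ν) :=
  (MeasurePreserving.id μ).skew_product (g := fun x u => u + g x)
    (by fun_prop)
    (ae_of_all μ fun x => map_add_right_eq_self ν (g x))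

lemma measurePreserving_doubleShear (f : C(K, G)) (g : C(G, K)) (μ : Measure G) (ν : Measure K)
    [SFinite μ] [SFinite ν] [μ.IsAddRightInvariant] [ν.IsAddRightInvariant] :
    MeasurePreserving (doubleShear f g) (μ.prod ν) (μ.prod ν) :=
  ((Measure.measurePreserving_swap.comp (measurePreserving_verticalShear f ν μ)).comp
    Measure.measurePreserving_swap).comp (measurePreserving_verticalShear g μ ν)

end Shear

section Torus

lemma pr2_add (a b : R2) : pr2 (a + b) = pr2 a + pr2 b := rfl

lemma pr2_sub (a b : R2) : pr2 (a - b) = pr2 a - pr2 b := rfl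

lemma pr2_surjective : Function.Surjective pr2 :=
  Prod.map_surjective.2 ⟨QuotientAddGroup.mk_surjective, QuotientAddGroup.mk_surjective⟩

lemma enorm2_eq_norm (v : R2) : enorm2 v = ‖(⟨v.1, v.2⟩ : ℂ)‖ :=
  (Complex.norm_eq_sqrt_sq_add_sq ⟨v.1, v.2⟩).symm

lemma enorm2_nonneg (v : R2) : 0 ≤ enorm2 v :=
  Real.sqrt_nonneg _

lemma enorm2_le_abs_add_abs (v : R2) : enorm2 v ≤ |v.1| + |v.2| := by
  rw [enorm2_eq_norm]
  exact Complex.norm_le_abs_re_add_abs_im _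

lemma enorm2_sub_le (v w : R2) : enorm2 (v - w) ≤ enorm2 v + enorm2 w := by
  simp only [enorm2_eq_norm]
  exact norm_sub_le (⟨v.1, v.2⟩ : ℂ) ⟨w.1, w.2⟩

lemma enorm2_le_enorm2 {v w : R2} (h₁ : |v.1| ≤ |w.1|) (h₂ : |v.2| ≤ |w.2|) :
    enorm2 v ≤ enorm2 w :=
  Real.sqrt_le_sqrt (add_le_add (sq_le_sq.2 h₁) (sq_le_sq.2 h₂))

lemma distT2_nonneg (x y : T2) : 0 ≤ distT2 x y := by
  apply Real.sInf_nonneg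
  rintro _ ⟨a, b, -, -, rfl⟩
  exact enorm2_nonneg _

lemma distT2_pr2_le (a b : R2) : distT2 (pr2 a) (pr2 b) ≤ enorm2 (a - b) := by
  refine csInf_le ⟨0, ?_⟩ ⟨a, b, rfl, rfl, rfl⟩
  rintro _ ⟨a, b, -, -, rfl⟩
  exact enorm2_nonneg _

lemma exists_lifts_enorm2_sub_lt (x y : T2) {ε : ℝ} (hε : 0 < ε) :
    ∃ a b : R2, pr2 a = x ∧ pr2 b = y ∧ enorm2 (a - b) < distT2 x y + ε := by
  obtain ⟨a₀, ha₀⟩ := pr2_surjective x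
  obtain ⟨b₀, hb₀⟩ := pr2_surjective y
  obtain ⟨_, ⟨a, b, ha, hb, rfl⟩, hab⟩ := exists_lt_of_csInf_lt
    (s := {r | ∃ a b : R2, pr2 a = x ∧ pr2 b = y ∧ r = enorm2 (a - b)})
    ⟨_, a₀, b₀, ha₀, hb₀, rfl⟩ (lt_add_of_pos_right (distT2 x y) hε)
  exact ⟨a, b, ha, hb, hab⟩

lemma isOfFinAddOrder_iff_exists_eq_coe_rat (u : AddCircle (1 : ℝ)) :
    IsOfFinAddOrder u ↔ ∃ r : ℚ, u = ((r : ℝ) : AddCircle (1 : ℝ)) := by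
  constructor
  · obtain ⟨t, rfl⟩ := QuotientAddGroup.mk_surjective u
    intro ht
    obtain ⟨r, hr⟩ := AddCircle.isOfFinAddOrder_iff_exists_rat_eq_div.1 ht
    exact ⟨r, by rw [hr, div_one]⟩
  · rintro ⟨r, rfl⟩
    exact AddCircle.isOfFinAddOrder_iff_exists_rat_eq_div.2 ⟨r, (div_one _).symm⟩

lemma mem_GammaSet_iff {z : T2} :
    z ∈ GammaSet ↔ IsOfFinAddOrder z.1 ∨ IsOfFinAddOrder z.2 :=
  or_congr (isOfFinAddOrder_iff_exists_eq_coe_rat z.1).symm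
    (isOfFinAddOrder_iff_exists_eq_coe_rat z.2).symm

lemma pr2_notMem_GammaSet {v : R2} (h₁ : Irrational v.1) (h₂ : Irrational v.2) :
    pr2 v ∉ GammaSet := by
  simp only [mem_GammaSet_iff, pr2, AddCircle.isOfFinAddOrder_iff_exists_rat_eq_div, div_one]
  exact not_or.2 ⟨h₁, h₂⟩

lemma nsmul_snd_ne_zero_of_notMem_GammaSet {z : T2} (hz : z ∉ GammaSet) {q : ℕ} (hq : q ≠ 0) :
    q • z.2 ≠ 0 := fun h =>
  hz (mem_GammaSet_iff.2 (.inr (isOfFinAddOrder_iff_nsmul_eq_zero.2 ⟨q, hq.bot_lt, h⟩)))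

end Torus

section TorusShear

/-- The self-map of the circle `ℝ / pℤ` induced by a continuous `p`-periodic function on the line,
serving as the displacement of a shear of the torus. -/
def circleDisplacement {p : ℝ} {φ : C(ℝ, ℝ)} (hφ : Function.Periodic φ p) :
    C(AddCircle p, AddCircle p) where
  toFun t := (hφ.lift t : AddCircle p)
  continuous_toFun := (AddCircle.continuous_mk' p).comp (continuous_quot_lift _ φ.continuous)

lemma circleDisplacement_coe {p : ℝ} {φ : C(ℝ, ℝ)} (hφ : Function.Periodic φ p) (t : ℝ) :
    circleDisplacement hφ (t : AddCircle p) = (φ t : AddCircle p) :=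
  rfl

lemma circleDisplacement_periodic {p c : ℝ} {φ : C(ℝ, ℝ)} (hφ : Function.Periodic φ p)
    (hc : Function.Periodic φ c) : Function.Periodic (circleDisplacement hφ) (c : AddCircle p) := by
  intro u
  obtain ⟨t, rfl⟩ := QuotientAddGroup.mk_surjective u
  rw [← AddCircle.coe_add, circleDisplacement_coe, circleDisplacement_coe, hc t]

lemma equivariant_doubleShear {φ ψ : C(ℝ, ℝ)} (hφ : Function.Periodic φ 1)
    (hψ : Function.Periodic ψ 1) : Equivariant (doubleShear φ ψ) := fun z v =>
  doubleShear_add_of_periodic (by simpa using hφ.int_mul v.2) (by simpa using hψ.int_mul v.1) z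

variable {φ ψ : C(ℝ, ℝ)} (hφ : Function.Periodic φ 1) (hψ : Function.Periodic ψ 1)

/-- The homeomorphism of the torus induced by the double shear of the plane along the 1-periodic
functions `φ` and `ψ`. -/
def torusShear : T2 ≃ₜ T2 :=
  doubleShear (circleDisplacement hφ) (circleDisplacement hψ)

lemma isLift_torusShear : IsLift (doubleShear φ ψ) (torusShear hφ hψ) := fun _ => rfl

lemma isotopicToId_torusShear : IsotopicToId (torusShear hφ hψ) :=
  ⟨(torusShear hφ hψ).isHomeomorph, doubleShear φ ψ, (doubleShear φ ψ).isHomeomorph,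
    isLift_torusShear hφ hψ, equivariant_doubleShear hφ hψ⟩

lemma isCrDiffeo_torusShear {r : ℕ∞} (hφr : ContDiff ℝ r φ) (hψr : ContDiff ℝ r ψ) :
    IsCrDiffeo r (torusShear hφ hψ) := by
  refine ⟨doubleShear φ ψ, (doubleShear φ ψ).symm, isLift_torusShear hφ hψ,
    (doubleShear φ ψ).left_inv, (doubleShear φ ψ).right_inv, ?_, ?_⟩
  · simp only [funext (doubleShear_apply φ ψ)]
    fun_prop
  · simp only [funext (doubleShear_symm_apply φ ψ)]
    fun_prop

lemma measurePreserving_torusShear :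
    MeasurePreserving (torusShear hφ hψ) (volume : Measure T2) volume :=
  measurePreserving_doubleShear _ _ volume volume

lemma torusShear_add_pr2 {a : R2} (ha₁ : Function.Periodic ψ a.1) (ha₂ : Function.Periodic φ a.2)
    (z : T2) : torusShear hφ hψ (z + pr2 a) = torusShear hφ hψ z + pr2 a :=
  doubleShear_add_of_periodic (circleDisplacement_periodic hφ ha₂)
    (circleDisplacement_periodic hψ ha₁) z

end TorusShear

section PeriodicBump

open scoped ContDiff

lemma exists_contDiff_periodic_vanishing_on_nonpos {g : ℝ → ℝ} {c t : ℝ} (hg : ContDiff ℝ ∞ g)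
    (hgc : Function.Periodic g c) (ht : 0 < g t) (A : ℝ) :
    ∃ φ : C(ℝ, ℝ), ContDiff ℝ ∞ φ ∧ Function.Periodic φ c ∧ φ t = A ∧
      (∀ s, g s ≤ 0 → φ s = 0) ∧ ∀ s, |φ s| ≤ |A| := by
  let φ (s : ℝ) : ℝ := A * Real.smoothTransition (g s / g t)
  have hφ : ContDiff ℝ ∞ φ :=
    contDiff_const.mul (Real.smoothTransition.contDiff.comp (hg.div_const _))
  refine ⟨⟨φ, hφ.continuous⟩, hφ, fun s => ?_, ?_, fun s hs => ?_, fun s => ?_⟩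
  · simp only [ContinuousMap.coe_mk, φ, hgc s]
  · simp only [ContinuousMap.coe_mk, φ, div_self ht.ne', Real.smoothTransition.one, mul_one]
  · simp only [ContinuousMap.coe_mk, φ, mul_zero, Real.smoothTransition.zero_of_nonpos
      (div_nonpos_of_nonpos_of_nonneg hs ht.le)]
  · simp only [ContinuousMap.coe_mk, φ, abs_mul, abs_of_nonneg (Real.smoothTransition.nonneg _)]
    exact mul_le_of_le_one_right (abs_nonneg A) (Real.smoothTransition.le_one _)

lemma exists_contDiff_periodic_separating {c s t : ℝ} (hc : c ≠ 0) (hst : ∀ n : ℤ, t - s ≠ n * c)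
    (A : ℝ) :
    ∃ φ : C(ℝ, ℝ), ContDiff ℝ ∞ φ ∧ Function.Periodic φ c ∧ φ s = 0 ∧ φ t = A ∧
      ∀ u, |φ u| ≤ |A| := by
  let g (u : ℝ) : ℝ := Real.sin (Real.pi * (u - s) / c) ^ 2
  have hg : ContDiff ℝ ∞ g := by fun_prop
  have hgc : Function.Periodic g c := fun u => by
    have hphase : Real.pi * (u + c - s) / c = Real.pi * (u - s) / c + Real.pi := by
      field_simp
      ring
    simp only [g, hphase, Real.sin_add_pi, neg_sq]
  have ht : 0 < g t := by
    refine sq_pos_of_ne_zero fun h => ?_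
    obtain ⟨n, hn⟩ := Real.sin_eq_zero_iff.1 h
    refine hst n (mul_left_cancel₀ Real.pi_ne_zero ?_)
    rw [eq_div_iff hc] at hn
    linarith
  obtain ⟨φ, hφ, hφc, hφt, hφ0, hφA⟩ := exists_contDiff_periodic_vanishing_on_nonpos hg hgc ht A
  exact ⟨φ, hφ, hφc, hφ0 s (by simp [g]), hφt, hφA⟩

lemma exists_contDiff_periodic_vanishing_on_half_translates {c s d : ℝ} (hd : 0 < d)
    (hdc : d < c / 2) (A : ℝ) :
    ∃ ψ : C(ℝ, ℝ), ContDiff ℝ ∞ ψ ∧ Function.Periodic ψ c ∧ ψ s = 0 ∧ ψ (s + d) = A ∧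
      ψ (s + c / 2) = 0 ∧ ψ (s + d + c / 2) = 0 ∧ ∀ u, |ψ u| ≤ |A| := by
  have hc : 0 < c := by linarith
  let g (u : ℝ) : ℝ := Real.sin (2 * Real.pi * (u - s) / c)
  have hg : ContDiff ℝ ∞ g := by fun_prop
  have hg_half (u : ℝ) : g (u + c / 2) = -g u := by
    have hphase : 2 * Real.pi * (u + c / 2 - s) / c = 2 * Real.pi * (u - s) / c + Real.pi := by
      field_simp
      ring
    simp only [g, hphase, Real.sin_add_pi]
  have hgc : Function.Periodic g c := fun u => by
    rw [← add_halves c, ← add_assoc, hg_half, hg_half, neg_neg]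
  have hgs : g s = 0 := by simp [g]
  have hgd : 0 < g (s + d) := by
    simp only [g, add_sub_cancel_left]
    apply Real.sin_pos_of_pos_of_lt_pi (by positivity)
    rw [div_lt_iff₀ hc]
    nlinarith [Real.pi_pos]
  obtain ⟨ψ, hψ, hψc, hψd, hψ0, hψA⟩ := exists_contDiff_periodic_vanishing_on_nonpos hg hgc hgd A
  refine ⟨ψ, hψ, hψc, hψ0 s hgs.le, hψd, hψ0 _ ?_, hψ0 _ ?_, hψA⟩
  · rw [hg_half, hgs, neg_zero]
  · rw [hg_half]
    exact (neg_neg_of_pos hgd).le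

end PeriodicBump

section PlanarShears

open scoped ContDiff

lemma exists_irrational_abs_apply_add_lt (φ : C(ℝ, ℝ)) {s η : ℝ} (hs : φ s = 0) (hη : 0 < η) :
    ∃ d, Irrational d ∧ 0 < d ∧ d < η ∧ |φ (s + d)| < η := by
  obtain ⟨δ, hδ, hφδ⟩ := Metric.continuousAt_iff.1 (φ.continuous.continuousAt (x := s)) η hη
  obtain ⟨d, hd, hd_pos, hd_lt⟩ := exists_irrational_btwn (lt_min hη hδ)
  obtain ⟨hdη, hdδ⟩ := lt_min_iff.1 hd_lt
  have hdist : dist (s + d) s < δ := by rwa [dist_self_add_left, Real.norm_of_nonneg hd_pos.le]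
  exact ⟨d, hd, hd_pos, hdη, by simpa [hs] using hφδ hdist⟩

lemma enorm2_doubleShear_sub_le {φ ψ : C(ℝ, ℝ)} {v : R2} (hφ : ∀ t, |φ t| ≤ |v.1|)
    (hψ : ∀ t, |ψ t| ≤ |v.2|) (z : R2) : enorm2 (doubleShear φ ψ z - z) ≤ enorm2 v := by
  apply enorm2_le_enorm2
  · simpa [doubleShear_apply] using hφ _
  · simpa [doubleShear_apply] using hψ _

lemma exists_planar_shears {a b : R2} {c η : ℝ} (hc : 0 < c) (hη : 0 < η)
    (hab : ∀ n : ℤ, a.2 - b.2 ≠ n * c) :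
    ∃ (φ ψ : C(ℝ, ℝ)) (e : R2), ContDiff ℝ ∞ φ ∧ ContDiff ℝ ∞ ψ ∧
      Function.Periodic φ c ∧ Function.Periodic ψ c ∧
      Irrational e.1 ∧ Irrational e.2 ∧ enorm2 e < η ∧
      doubleShear φ ψ (b + e) = a ∧ doubleShear φ ψ b = b ∧
      enorm2 (doubleShear φ ψ (b + e + (c / 2, 0)) - doubleShear φ ψ (b + (c / 2, 0))) < η ∧
      ∀ z, enorm2 (doubleShear φ ψ z - z) ≤ enorm2 (a - b) + η := by
  obtain ⟨e₁, he₁, he₁_pos, he₁_lt⟩ := exists_irrational_btwn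
    (show (0 : ℝ) < min (η / 3) (c / 2) by positivity)
  obtain ⟨he₁η, he₁c⟩ := lt_min_iff.1 he₁_lt
  obtain ⟨φ, hφ, hφc, hφb, hφa, hφ_le⟩ :=
    exists_contDiff_periodic_separating hc.ne' hab (a.1 - b.1 - e₁)
  obtain ⟨e₂, he₂, he₂_pos, he₂η, hφe₂⟩ :=
    exists_irrational_abs_apply_add_lt φ hφb (show 0 < η / 3 by positivity)
  obtain ⟨ψ, hψ, hψc, hψb, hψe, hψb', hψe', hψ_le⟩ :=
    exists_contDiff_periodic_vanishing_on_half_translates (s := b.1) he₁_pos he₁c (a.2 - b.2 - e₂)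
  have he : enorm2 (e₁, e₂) < η := by
    have hsum := enorm2_le_abs_add_abs (e₁, e₂)
    simp only [abs_of_pos he₁_pos, abs_of_pos he₂_pos] at hsum
    linarith
  refine ⟨φ, ψ, (e₁, e₂), hφ, hψ, hφc, hψc, he₁, he₂, he, ?_, ?_, ?_, fun z => ?_⟩
  · have hlift : b.2 + e₂ + (a.2 - b.2 - e₂) = a.2 := by ring
    simp only [doubleShear_apply, Prod.fst_add, Prod.snd_add, hψe, hlift, hφa]
    ext <;> simp
  · simp [doubleShear_apply, hψb, hφb]
  · refine (enorm2_le_abs_add_abs _).trans_lt ?_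
    have hhoriz : b.1 + e₁ + c / 2 + φ (b.2 + e₂) - (b.1 + c / 2) = e₁ + φ (b.2 + e₂) := by ring
    simp only [doubleShear_apply, Prod.fst_add, Prod.snd_add, Prod.fst_sub, Prod.snd_sub, add_zero,
      hψb', hψe', hφb, hhoriz, add_sub_cancel_left]
    have htri := abs_add_le e₁ (φ (b.2 + e₂))
    rw [abs_of_pos he₁_pos] at htri
    rw [abs_of_pos he₂_pos]
    linarith
  · calc enorm2 (doubleShear φ ψ z - z) ≤ enorm2 (a - b - (e₁, e₂)) :=
          enorm2_doubleShear_sub_le hφ_le hψ_le z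
      _ ≤ enorm2 (a - b) + enorm2 (e₁, e₂) := enorm2_sub_le _ _
      _ ≤ enorm2 (a - b) + η := by gcongr

end PlanarShears

section BuildingBlock

lemma sub_ne_intCast_mul_of_nsmul_coe_sub_ne_zero {s t : ℝ} {q : ℕ}
    (h : q • ((s : AddCircle (1 : ℝ)) - (t : AddCircle (1 : ℝ))) ≠ 0) (n : ℤ) :
    s - t ≠ n * (1 / (q : ℝ)) := fun hst => by
  have hq : (q : ℝ) ≠ 0 := fun hq => h (by rw [Nat.cast_eq_zero.1 hq, zero_nsmul])
  refine h ?_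
  rw [← AddCircle.coe_sub, ← AddCircle.coe_nsmul, AddCircle.coe_eq_zero_iff]
  refine ⟨n, ?_⟩
  rw [hst, zsmul_eq_mul, nsmul_eq_mul]
  field_simp

theorem anosov_katok_building_block_general (q : ℕ) (x y : T2) (hxy : q • (x.2 - y.2) ≠ 0)
    (σ : ℝ) (hσ : 0 < σ) (ε : ℝ) (hε : 0 < ε) :
    ∃ h : T2 → T2,
      IsotopicToId h ∧ IsCrDiffeo ⊤ h ∧
      MeasurePreserving h (volume : Measure T2) volume ∧
      (∀ z : T2, h (z + pr2 (1 / (q : ℝ), 0)) = h z + pr2 (1 / (q : ℝ), 0)) ∧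
      (∀ z : T2, h (z + pr2 (0, 1 / (q : ℝ))) = h z + pr2 (0, 1 / (q : ℝ))) ∧
      (∃ x' y' : T2, distT2 x' y' < σ ∧ x' - y' ∉ GammaSet ∧
        h x' = x ∧ h y' = y ∧
        distT2 (h (x' + pr2 (1 / (2 * (q : ℝ)), 0))) (h (y' + pr2 (1 / (2 * (q : ℝ)), 0))) < σ) ∧
      (∃ H : R2 → R2, IsHomeomorph H ∧ IsLift H h ∧ Equivariant H ∧
        ∀ z : R2, enorm2 (H z - z) ≤ distT2 x y + ε) := by
  have hq : (0 : ℝ) < q := Nat.cast_pos.2 <| Nat.pos_of_ne_zero <| by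
    rintro rfl
    exact hxy (zero_nsmul _)
  obtain ⟨a, b, rfl, rfl, hab⟩ := exists_lifts_enorm2_sub_lt x y (half_pos hε)
  obtain ⟨φ, ψ, e, hφ, hψ, hφq, hψq, he₁, he₂, he, hHa, hHb, hHhalf, hHz⟩ :=
    exists_planar_shears (one_div_pos.2 hq) (lt_min hσ (half_pos hε))
      (sub_ne_intCast_mul_of_nsmul_coe_sub_ne_zero hxy)
  have hφ₁ : Function.Periodic φ 1 := by simpa [hq.ne'] using hφq.nat_mul q
  have hψ₁ : Function.Periodic ψ 1 := by simpa [hq.ne'] using hψq.nat_mul q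
  have hlift := isLift_torusShear hφ₁ hψ₁
  have hhalf : 1 / (2 * (q : ℝ)) = 1 / q / 2 := by ring
  refine ⟨torusShear hφ₁ hψ₁, isotopicToId_torusShear hφ₁ hψ₁, isCrDiffeo_torusShear hφ₁ hψ₁ hφ hψ,
    measurePreserving_torusShear hφ₁ hψ₁,
    torusShear_add_pr2 hφ₁ hψ₁ hψq (by simp [Function.Periodic]),
    torusShear_add_pr2 hφ₁ hψ₁ (by simp [Function.Periodic]) hφq,
    ⟨pr2 (b + e), pr2 b, ?_, ?_, by rw [← hlift, hHa], by rw [← hlift, hHb], ?_⟩,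
    doubleShear φ ψ, (doubleShear φ ψ).isHomeomorph, hlift, equivariant_doubleShear hφ₁ hψ₁,
    fun z => ?_⟩
  · calc distT2 (pr2 (b + e)) (pr2 b) ≤ enorm2 (b + e - b) := distT2_pr2_le _ _
      _ = enorm2 e := by rw [add_sub_cancel_left]
      _ < σ := he.trans_le (min_le_left _ _)
  · rw [← pr2_sub, add_sub_cancel_left]
    exact pr2_notMem_GammaSet he₁ he₂
  · rw [hhalf, ← pr2_add, ← pr2_add, ← hlift, ← hlift]
    exact (distT2_pr2_le _ _).trans_lt (hHhalf.trans_le (min_le_left _ _))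
  · linarith [hHz z, min_le_right σ (ε / 2)]

end BuildingBlock

/-- **Lemma 6.2.** For any integer q ≥ 2, any x ≠ y in 𝕋² with x − y ∉ Γ, and any σ > 0,
there is a volume-preserving C^∞ diffeomorphism h of 𝕋², isotopic to the identity, commuting
with T_{(1/q,0)} and T_{(0,1/q)}, with points x', y' as in (2) and a lift h̃ with
d_{C⁰}(h̃, Id) ≤ 3 d(x,y) + 2/q. -/
theorem anosov_katok_building_block
    (q : ℕ) (hq : 2 ≤ q) (x y : T2) (hxy : x ≠ y) (hΓ : x - y ∉ GammaSet)
    (σ : ℝ) (hσ : 0 < σ) :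
    ∃ h : T2 → T2,
      IsotopicToId h ∧ IsCrDiffeo ⊤ h ∧
      MeasurePreserving h (volume : Measure T2) volume ∧
      (∀ z : T2, h (z + pr2 (1 / (q : ℝ), 0)) = h z + pr2 (1 / (q : ℝ), 0)) ∧
      (∀ z : T2, h (z + pr2 (0, 1 / (q : ℝ))) = h z + pr2 (0, 1 / (q : ℝ))) ∧
      (∃ x' y' : T2, distT2 x' y' < σ ∧ x' - y' ∉ GammaSet ∧
        h x' = x ∧ h y' = y ∧
        distT2 (h (x' + pr2 (1 / (2 * (q : ℝ)), 0))) (h (y' + pr2 (1 / (2 * (q : ℝ)), 0))) < σ) ∧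
      (∃ H : R2 → R2, IsHomeomorph H ∧ IsLift H h ∧ Equivariant H ∧
        ∀ z : R2, enorm2 (H z - z) ≤ 3 * distT2 x y + 2 / (q : ℝ)) := by
  have hqxy : q • (x.2 - y.2) ≠ 0 := nsmul_snd_ne_zero_of_notMem_GammaSet hΓ (by lia)
  obtain ⟨h, hiso, hdiffeo, hvol, hhor, hver, hpts, H, hH, hlift, hequiv, hbound⟩ :=
    anosov_katok_building_block_general q x y hqxy σ hσ (2 / q) (by positivity)
  exact ⟨h, hiso, hdiffeo, hvol, hhor, hver, hpts, H, hH, hlift, hequiv, fun z =>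
    (hbound z).trans (by linarith [distT2_nonneg x y])⟩
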